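/- arXiv:1810.04054 — 2 statements merged into one kernel-verified Lean document; each statement's English description precedes it below -/
import Mathlib

section
/- Let α ≥ 0 be real. Then for every real z: e^{−z²} = −2α z² M(−α/2 + 1/2, 3/2, −z²) M(−α/2 + 1, 3/2, −z²) + M(−α/2, 1/2, −z²) M(−α/2 + 1/2, 1/2, −z²). -/
noncomputable def poch (a : ℝ) (s : ℕ) : ℝ := ∏ i ∈ Finset.range s, (a + i)

/-- Kummer's confluent hypergeometric function `M(a,b,z)`,
defined by the everywhere-convergent series `M(a,b,z) = Σ_{s} (a)_s z^s / ((b)_s s!)`. -/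
noncomputable def kummerM (a b z : ℝ) : ℝ :=
  ∑' s : ℕ, poch a s / (poch b s * (Nat.factorial s)) * z ^ s

/-- Tricomi's confluent hypergeometric function
`U(a,b,z) = (1/Γ(a)) ∫_0^∞ e^{−z t} t^{a−1} (1+t)^{b−a−1} dt`. -/
noncomputable def tricomiU (a b z : ℝ) : ℝ :=
  (1 / Real.Gamma a) *
    ∫ t in Set.Ioi (0:ℝ), Real.exp (-z * t) * t ^ (a - 1) * (1 + t) ^ (b - a - 1)

lemma hasSum_of_eq' {f g : ℕ → ℝ} {c : ℝ} (h : HasSum f c) (e : ∀ s, g s = f s) : HasSum g c := by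
  rwa [show g = f from funext e]

lemma poch_zero' (a : ℝ) : poch a 0 = 1 := by simp [poch]

lemma poch_succ' (a : ℝ) (s : ℕ) : poch a (s + 1) = poch a s * (a + s) := by
  simp [poch, Finset.prod_range_succ]

lemma poch_succ_left (a : ℝ) (s : ℕ) : poch a (s + 1) = a * poch (a + 1) s := by
  simp only [poch, Finset.prod_range_succ']
  rw [mul_comm]
  congr 1
  · simp
  · apply Finset.prod_congr rfl
    intro i _
    push_cast
    ring

lemma poch_shift (a : ℝ) (s : ℕ) : a * poch (a + 1) s = poch a s * (a + s) := by
  rw [← poch_succ_left, poch_succ']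

lemma poch_pos' {b : ℝ} (hb : 0 < b) (s : ℕ) : 0 < poch b s := by
  unfold poch
  apply Finset.prod_pos
  intro i _
  positivity

/-- coefficients of the Kummer series -/
noncomputable def kc (a b : ℝ) (s : ℕ) : ℝ := poch a s / (poch b s * (Nat.factorial s))

lemma kummerM_eq (a b z : ℝ) : kummerM a b z = ∑' s : ℕ, kc a b s * z ^ s := rfl

lemma kc_zero (a b : ℝ) : kc a b 0 = 1 := by simp [kc, poch_zero']

lemma kc_succ (a : ℝ) {b : ℝ} (hb : 0 < b) (s : ℕ) :
    kc a b (s + 1) = kc a b s * ((a + s) / ((b + s) * (s + 1))) := by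
  have h1 := poch_pos' hb s
  have h2 : (0:ℝ) < b + s := by positivity
  have h3 : (0:ℝ) < Nat.factorial s := by positivity
  simp only [kc, poch_succ', Nat.factorial_succ]
  push_cast
  field_simp

lemma kc_shift (a : ℝ) {b : ℝ} (hb : 0 < b) (s : ℕ) :
    kc a b (s + 1) * (s + 1) = a / b * kc (a + 1) (b + 1) s := by
  have h1 := poch_pos' (by linarith : 0 < b + 1) s
  have h3 : (0:ℝ) < Nat.factorial s := by positivity
  simp only [kc, poch_succ_left, Nat.factorial_succ]
  push_cast
  field_simp

lemma kc_a (a b : ℝ) (s : ℕ) : a * kc (a + 1) b s = (a + s) * kc a b s := by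
  simp only [kc, ← mul_div_assoc, poch_shift]
  ring

lemma kc_b (a : ℝ) {b : ℝ} (hb : 0 < b) (s : ℕ) : b * kc a b s = (b + s) * kc a (b + 1) s := by
  have h1 := poch_pos' (by linarith : 0 < b + 1) s
  have h0 := poch_pos' hb s
  have h3 : (0:ℝ) < Nat.factorial s := by positivity
  have h := poch_shift b s
  simp only [kc]
  field_simp
  linear_combination poch a s * h

lemma kc_summable (a : ℝ) {b : ℝ} (hb : 0 < b) (x : ℝ) :
    Summable (fun s => kc a b s * x ^ s) := by
  apply summable_of_ratio_norm_eventually_le (r := 1 / 2) (by norm_num)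
  filter_upwards [Filter.eventually_ge_atTop ⌈2 * |x| * (1 + |a| / b)⌉₊] with s hs
  have hs' : 2 * |x| * (1 + |a| / b) ≤ s := Nat.ceil_le.mp hs
  have h2 : (0:ℝ) < b + s := by positivity
  have hr : |(a + s) / ((b + s) * (s + 1))| * |x| ≤ 1 / 2 := by
    rw [abs_div, abs_of_pos (by positivity : (0:ℝ) < (b + s) * (s + 1)), div_mul_eq_mul_div,
      div_le_iff₀ (by positivity)]
    have h4 : |a + s| ≤ (1 + |a| / b) * (b + s) := by
      have : |a + s| ≤ |a| + s := by
        simpa using abs_add_le a (s:ℝ)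
      have h5 : (1 + |a| / b) * (b + s) = b + s + |a| + |a| / b * s := by
        field_simp
        ring
      have : 0 ≤ |a| / b * s := by positivity
      linarith
    calc |a + s| * |x| ≤ ((1 + |a| / b) * (b + s)) * |x| := by gcongr
      _ = 1 / 2 * ((b + s) * (2 * |x| * (1 + |a| / b))) := by ring
      _ ≤ 1 / 2 * ((b + s) * (s + 1)) := by gcongr; linarith
  have : kc a b (s + 1) * x ^ (s + 1) =
      ((a + s) / ((b + s) * (s + 1)) * x) * (kc a b s * x ^ s) := by
    rw [kc_succ a hb]; ring
  rw [this, norm_mul]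
  gcongr
  rw [norm_mul]
  exact hr

lemma kc_hasSum (a : ℝ) {b : ℝ} (hb : 0 < b) (x : ℝ) :
    HasSum (fun s => kc a b s * x ^ s) (kummerM a b x) := (kc_summable a hb x).hasSum

lemma kummer_deriv (a : ℝ) {b : ℝ} (hb : 0 < b) (x : ℝ) :
    HasDerivAt (kummerM a b) (a / b * kummerM (a + 1) (b + 1) x) x := by
  have hb1 : 0 < b + 1 := by linarith
  set R : ℝ := |x| + 1 with hR
  have hR0 : 0 < R := by positivity
  have key : HasDerivAt (fun y => ∑' s : ℕ, kc a b s * y ^ s)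
      (∑' s : ℕ, kc a b s * (s * x ^ (s - 1))) x := by
    apply hasDerivAt_tsum_of_isPreconnected (t := Metric.ball (0:ℝ) R)
      (u := fun s : ℕ => |kc a b s| * (s * R ^ (s - 1))) (y₀ := 0)
      (g := fun (s : ℕ) y => kc a b s * y ^ s)
      (g' := fun (s : ℕ) y => kc a b s * (s * y ^ (s - 1)))
    · rw [← summable_nat_add_iff 1]
      refine (((kc_summable (a + 1) hb1 R).abs).mul_left |a / b|).congr ?_
      intro s
      have := kc_shift a hb s
      rw [← abs_mul, ← mul_assoc, ← this, abs_mul, abs_mul,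
        abs_of_pos (by positivity : (0:ℝ) < s + 1), abs_of_pos (by positivity : 0 < R ^ s)]
      push_cast
      simp [mul_assoc]
    · exact Metric.isOpen_ball
    · exact (convex_ball (0:ℝ) R).isPreconnected
    · intro n y _
      exact (hasDerivAt_pow n y).const_mul _
    · intro n y hy
      have hy' : |y| ≤ R := by
        have := Metric.mem_ball.mp hy
        simp at this
        exact this.le
      simp only [norm_mul, norm_pow, Real.norm_eq_abs, Nat.abs_cast]
      gcongr
    · simpa using hR0
    · exact kc_summable a hb 0
    · simp [hR]
  have e : (∑' s : ℕ, kc a b s * (s * x ^ (s - 1))) = a / b * kummerM (a + 1) (b + 1) x := by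
    have h := (kc_hasSum (a + 1) hb1 x).mul_left (a / b)
    have h' : HasSum (fun s : ℕ => kc a b (s + 1) * (((s + 1 : ℕ) : ℝ) * x ^ (s + 1 - 1)))
        (a / b * kummerM (a + 1) (b + 1) x) := by
      refine hasSum_of_eq' h ?_
      intro s
      push_cast
      linear_combination x ^ s * kc_shift a hb s
    have h2 := (hasSum_nat_add_iff (f := fun s : ℕ => kc a b s * (s * x ^ (s - 1))) 1).mp h'
    simpa using h2.tsum_eq
  rw [← e]
  exact key

lemma theta_hasSum (a : ℝ) {b : ℝ} (hb : 0 < b) (x : ℝ) :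
    HasSum (fun s : ℕ => s * kc a b s * x ^ s) (x * (a / b * kummerM (a + 1) (b + 1) x)) := by
  have hb1 : 0 < b + 1 := by linarith
  have h := ((kc_hasSum (a + 1) hb1 x).mul_left (a / b)).mul_left x
  have h' : HasSum (fun s : ℕ => ((s + 1 : ℕ) : ℝ) * kc a b (s + 1) * x ^ (s + 1))
      (x * (a / b * kummerM (a + 1) (b + 1) x)) := by
    refine hasSum_of_eq' h ?_
    intro s
    push_cast
    linear_combination x ^ (s + 1) * kc_shift a hb s
  have h2 := (hasSum_nat_add_iff (f := fun s : ℕ => s * kc a b s * x ^ s) 1).mp h'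
  simpa using h2

/-- lowering b -/
lemma rel_b (a : ℝ) {b : ℝ} (hb : 0 < b) (x : ℝ) :
    x * (a / (b + 1) * kummerM (a + 1) (b + 1 + 1) x) + b * kummerM a (b + 1) x
      = b * kummerM a b x := by
  have h1 := (theta_hasSum a (by linarith : 0 < b + 1) x).add
    ((kc_hasSum a (by linarith : 0 < b + 1) x).mul_left b)
  refine h1.unique (hasSum_of_eq' ((kc_hasSum a hb x).mul_left b) ?_)
  intro s
  linear_combination (-x ^ s) * kc_b a hb s

/-- raising a -/
lemma rel_a (a : ℝ) {b : ℝ} (hb : 0 < b) (x : ℝ) :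
    x * (a / b * kummerM (a + 1) (b + 1) x) + a * kummerM a b x
      = a * kummerM (a + 1) b x := by
  have h1 := (theta_hasSum a hb x).add ((kc_hasSum a hb x).mul_left a)
  refine h1.unique (hasSum_of_eq' ((kc_hasSum (a + 1) hb x).mul_left a) ?_)
  intro s
  linear_combination (-x ^ s) * kc_a a b s

lemma W_const (a x : ℝ) :
    kummerM a (1/2) x * kummerM (a + 1/2) (1/2) x
      - 4 * a * x * kummerM (a + 1/2) (3/2) x * kummerM (a + 1) (3/2) x = Real.exp x := by
  have hh : (0:ℝ) < 1/2 := by norm_num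
  have h3 : (0:ℝ) < 3/2 := by norm_num
  set f : ℝ → ℝ := fun x => Real.exp (-x) * (kummerM a (1/2) x * kummerM (a + 1/2) (1/2) x
      - 4 * a * x * kummerM (a + 1/2) (3/2) x * kummerM (a + 1) (3/2) x) with hf
  have hd : ∀ y, HasDerivAt f 0 y := by
    intro y
    have dA := kummer_deriv a hh y
    have dB := kummer_deriv (a + 1/2) hh y
    have dC := kummer_deriv (a + 1/2) h3 y
    have dD := kummer_deriv (a + 1) h3 y
    have rC := rel_b (a + 1/2) hh y
    have rD := rel_b (a + 1) hh y
    have rA := rel_a a hh y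
    have rB := rel_a (a + 1/2) h3 y
    have e1 : (1/2 + 1 : ℝ) = 3/2 := by norm_num
    rw [e1] at dA dB rC rD rA
    have dW := ((dA.mul dB).sub (((((hasDerivAt_id y).const_mul (4 * a)).mul dC)).mul dD))
    have dE := (hasDerivAt_neg y).exp
    refine (dE.mul dW).congr_deriv ?_
    simp only [Pi.mul_apply, Pi.sub_apply, id]
    clear dA dB dC dD dW dE
    generalize kummerM (a + 1/2 + 1) (3/2 + 1) y = C' at *
    generalize kummerM (a + 1 + 1) (3/2 + 1) y = D' at *
    generalize kummerM (a + 1/2 + 1) (3/2) y = B' at *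
    generalize kummerM (a + 1) (1/2) y = A₁ at *
    generalize kummerM a (1/2) y = A at *
    generalize kummerM (a + 1/2) (1/2) y = B at *
    generalize kummerM (a + 1/2) (3/2) y = C at *
    generalize kummerM (a + 1) (3/2) y = D at *
    linear_combination Real.exp (-y) *
      (2 * A * (rC - rB) - 4 * a * D * rC - 4 * a * C * rD + 2 * C * rA)
  have hc : ∀ y, f y = f 0 := fun y =>
    is_const_of_deriv_eq_zero (fun y => (hd y).differentiableAt) (fun y => (hd y).deriv) y 0
  have k0 : ∀ c b : ℝ, kummerM c b 0 = 1 := by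
    intro c b
    rw [kummerM_eq, tsum_eq_single 0]
    · simp [kc_zero]
    · intro s hs
      simp [hs]
  have h := hc x
  simp only [hf, k0] at h
  have h1 : Real.exp x * Real.exp (-x) = 1 := by rw [← Real.exp_add]; simp
  simp only [neg_zero, Real.exp_zero] at h
  linear_combination Real.exp x * h - (kummerM a (1/2) x * kummerM (a + 1/2) (1/2) x
      - 4 * a * x * kummerM (a + 1/2) (3/2) x * kummerM (a + 1) (3/2) x) * h1

/-- for `α ≥ 0` and all real `z`,
`e^{−z²} = −2α z² M(−α/2+1/2,3/2,−z²) M(−α/2+1,3/2,−z²) + M(−α/2,1/2,−z²) M(−α/2+1/2,1/2,−z²)`. -/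
theorem statement_6 (α : ℝ) (hα : 0 ≤ α) (z : ℝ) :
    Real.exp (-z ^ 2) =
      -2 * α * z ^ 2 * kummerM (-α / 2 + 1 / 2) (3 / 2) (-z ^ 2)
          * kummerM (-α / 2 + 1) (3 / 2) (-z ^ 2)
        + kummerM (-α / 2) (1 / 2) (-z ^ 2) * kummerM (-α / 2 + 1 / 2) (1 / 2) (-z ^ 2) := by
  have h := W_const (-α / 2) (-z ^ 2)
  rw [← h]
  ring
end

section
/- Let α > 0 and let k_l, k_s, d_l, d_s, γ, T_i, T_∞, h₀ be positive constants with ω = √(d_l/d_s). If h₀ > 2^α Γ(α/2 + 1) k_s T_i d_s^{(α−1)/2} / (T_∞ √π), then there exists exactly one x > 0 satisfying equation (24): −(k_s T_i d_s^{(α−1)/2} / (γ d_l^{(α+1)/2})) f₁(x) + (h₀ T_∞ / (γ 2^α d_l^{(α+1)/2})) f₂(x) = x^{α+1}. -/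
open MeasureTheory Set Filter Topology

lemma poch_pos {a : ℝ} (ha : 0 < a) (s : ℕ) : 0 < poch a s :=
  Finset.prod_pos fun i _ => by positivity

lemma kummer_coef_pos {a b : ℝ} (ha : 0 < a) (hb : 0 < b) (s : ℕ) :
    0 < poch a s / (poch b s * (Nat.factorial s)) := by
  have := poch_pos ha s
  have := poch_pos hb s
  positivity

lemma kummer_summable {a b z : ℝ} (ha : 0 < a) (hb : 0 < b) (hz : 0 ≤ z) :
    Summable fun s : ℕ => poch a s / (poch b s * (Nat.factorial s)) * z ^ s := by
  rcases hz.eq_or_lt with rfl | hz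
  · apply summable_of_ne_finset_zero (s := {0})
    intro s hs
    have : s ≠ 0 := by simpa using hs
    simp [this]
  refine summable_of_ratio_test_tendsto_lt_one (l := 0) one_pos
    (Eventually.of_forall fun n => (mul_pos (kummer_coef_pos ha hb n) (pow_pos hz n)).ne') ?_
  have h1 : Tendsto (fun n : ℕ => (a + n) / (b + n)) atTop (𝓝 1) := by
    have h : Tendsto (fun n : ℕ => 1 + (a - b) * (1 / (b + n))) atTop (𝓝 (1 + (a - b) * 0)) := by
      refine tendsto_const_nhds.add (tendsto_const_nhds.mul ?_)
      simp only [one_div]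
      exact tendsto_inv_atTop_zero.comp
        (tendsto_atTop_add_const_left _ _ tendsto_natCast_atTop_atTop)
    simp only [mul_zero, add_zero] at h
    refine h.congr fun n => ?_
    have : b + n ≠ 0 := by positivity
    field_simp
    ring
  have h2 : Tendsto (fun n : ℕ => (a + n) / (b + n) * (z * (1 / ((n : ℝ) + 1)))) atTop
      (𝓝 (1 * (z * 0))) :=
    h1.mul (tendsto_const_nhds.mul tendsto_one_div_add_atTop_nhds_zero_nat)
  simp only [mul_zero] at h2
  refine h2.congr fun n => ?_
  have pa := poch_pos ha n
  have pb := poch_pos hb n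
  have pa' := (mul_pos (kummer_coef_pos ha hb n) (pow_pos hz n))
  have pa'' := (mul_pos (kummer_coef_pos ha hb (n+1)) (pow_pos hz (n+1)))
  rw [Real.norm_of_nonneg pa'.le, Real.norm_of_nonneg pa''.le]
  have e1 : poch a (n+1) = poch a n * (a + n) := Finset.prod_range_succ _ _
  have e2 : poch b (n+1) = poch b n * (b + n) := Finset.prod_range_succ _ _
  have : b + n ≠ 0 := by positivity
  rw [e1, e2, Nat.factorial_succ]
  push_cast
  field_simp
  ring

lemma kummer_mono {a b : ℝ} (ha : 0 < a) (hb : 0 < b) {z w : ℝ} (hz : 0 ≤ z) (hzw : z ≤ w) :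
    kummerM a b z ≤ kummerM a b w := by
  refine Summable.tsum_le_tsum (fun s => ?_) (kummer_summable ha hb hz)
    (kummer_summable ha hb (hz.trans hzw))
  have := (kummer_coef_pos ha hb s).le
  gcongr

lemma kummer_zero (a b : ℝ) : kummerM a b 0 = 1 := by
  unfold kummerM
  rw [tsum_eq_single 0]
  · simp [poch]
  · intro n hn
    simp [hn]

lemma kummer_cont {a b : ℝ} (ha : 0 < a) (hb : 0 < b) (R : ℝ) (hR : 0 ≤ R) :
    ContinuousOn (kummerM a b) (Icc 0 R) := by
  refine continuousOn_tsum (fun i => by fun_prop) (kummer_summable ha hb hR) ?_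
  intro n x hx
  have := (kummer_coef_pos ha hb n).le
  have hx0 := hx.1
  rw [Real.norm_of_nonneg (by positivity)]
  gcongr
  exact hx.2

lemma beta_int {a : ℝ} (ha : 0 < a) :
    IntegrableOn (fun u : ℝ => u ^ (a - 1) * (1 - u) ^ (-(1/2) : ℝ)) (Ioo 0 1) ∧
    ∫ u in Ioo (0:ℝ) 1, u ^ (a - 1) * (1 - u) ^ (-(1/2) : ℝ)
      = Real.Gamma a * √Real.pi / Real.Gamma (a + 1/2) := by
  have h1 := Complex.betaIntegral_convergent (u := (a:ℂ)) (v := ((1/2 : ℝ):ℂ))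
    (by simpa using ha) (by rw [Complex.ofReal_re]; norm_num)
  have h2 := ProbabilityTheory.beta_eq_betaIntegralReal a (1/2) ha (by norm_num)
  rw [intervalIntegrable_iff_integrableOn_Ioo_of_le zero_le_one] at h1
  have key : ∀ u ∈ Ioo (0:ℝ) 1, (u:ℂ) ^ ((a:ℂ) - 1) * (1 - (u:ℂ)) ^ (((1/2 : ℝ):ℂ) - 1)
      = ((u ^ (a - 1) * (1 - u) ^ (-(1/2) : ℝ) : ℝ) : ℂ) := by
    intro u hu
    have h0 : 0 ≤ 1 - u := by linarith [hu.2]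
    push_cast [Complex.ofReal_cpow hu.1.le, Complex.ofReal_cpow h0]
    norm_num
  have h3 := h1.congr_fun key measurableSet_Ioo
  have h4 : IntegrableOn (fun u : ℝ => u ^ (a - 1) * (1 - u) ^ (-(1/2) : ℝ)) (Ioo 0 1) := by
    have h5 := h3.re
    simp only [RCLike.re_to_complex, Complex.ofReal_re] at h5
    exact h5
  refine ⟨h4, ?_⟩
  unfold Complex.betaIntegral at h2
  rw [intervalIntegral.integral_of_le zero_le_one, integral_Ioc_eq_integral_Ioo,
    setIntegral_congr_fun measurableSet_Ioo key, integral_complex_ofReal, Complex.ofReal_re] at h2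
  rw [← h2, ProbabilityTheory.beta, Real.Gamma_one_half_eq]

lemma tri_int {a : ℝ} (ha : 0 < a) :
    IntegrableOn (fun t : ℝ => t ^ (a - 1) * (1 + t) ^ (1/2 - a - 1)) (Ioi 0) ∧
    ∫ t in Ioi (0:ℝ), t ^ (a - 1) * (1 + t) ^ (1/2 - a - 1)
      = Real.Gamma a * √Real.pi / Real.Gamma (a + 1/2) := by
  obtain ⟨h1, h2⟩ := beta_int ha
  have him : (fun t : ℝ => t / (1 + t)) '' Ioi 0 = Ioo 0 1 := by
    ext u
    constructor
    · rintro ⟨t, ht, rfl⟩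
      have ht : 0 < t := ht
      refine ⟨by positivity, ?_⟩
      simp only
      rw [div_lt_one (by positivity)]
      linarith
    · rintro ⟨h0, h1⟩
      have h3 : 0 < 1 - u := by linarith
      refine ⟨u / (1 - u), div_pos h0 h3, ?_⟩
      simp only
      field_simp
      ring
  have hinj : InjOn (fun t : ℝ => t / (1 + t)) (Ioi 0) := by
    intro s hs t ht h
    have hs : 0 < s := hs
    have ht : 0 < t := ht
    simp only at h
    rw [div_eq_div_iff (by positivity) (by positivity)] at h
    linarith
  have hd : ∀ t ∈ Ioi (0:ℝ), HasDerivWithinAt (fun t : ℝ => t / (1 + t)) (1 / (1 + t)^2) (Ioi 0) t := by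
    intro t ht
    have ht : 0 < t := ht
    have h := (hasDerivAt_id' t).fun_div ((hasDerivAt_id' t).const_add 1) (by positivity)
    refine (h.congr_deriv ?_).hasDerivWithinAt
    ring
  have key : ∀ t ∈ Ioi (0:ℝ), |1 / (1 + t)^2| • ((t / (1 + t)) ^ (a - 1) *
      (1 - t / (1 + t)) ^ (-(1/2) : ℝ)) = t ^ (a - 1) * (1 + t) ^ (1/2 - a - 1) := by
    intro t ht
    have ht : 0 < t := ht
    have h1t : 0 < 1 + t := by positivity
    rw [abs_of_pos (by positivity), smul_eq_mul, Real.div_rpow ht.le h1t.le]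
    have : 1 - t / (1 + t) = (1 + t) ^ (-1 : ℝ) := by
      rw [Real.rpow_neg_one]; field_simp; ring
    rw [this, ← Real.rpow_mul h1t.le, div_eq_mul_inv (t ^ (a-1)), ← Real.rpow_neg h1t.le, one_div,
      ← Real.rpow_natCast (1 + t) 2, ← Real.rpow_neg h1t.le]
    have : (1 + t) ^ (1/2 - a - 1) = (1 + t) ^ (-((2:ℕ):ℝ)) * (1 + t) ^ (-(a - 1)) *
        (1 + t) ^ (-1 * -(1/2) : ℝ) := by
      rw [← Real.rpow_add h1t, ← Real.rpow_add h1t]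
      congr 1
      push_cast
      ring
    rw [this]
    ring
  constructor
  · rw [← him, integrableOn_image_iff_integrableOn_abs_deriv_smul measurableSet_Ioi hd hinj] at h1
    exact h1.congr_fun key measurableSet_Ioi
  · rw [← him, integral_image_eq_integral_abs_deriv_smul measurableSet_Ioi hd hinj,
      setIntegral_congr_fun measurableSet_Ioi key] at h2
    exact h2

lemma tri_meas (a z : ℝ) : AEStronglyMeasurable
    (fun t : ℝ => Real.exp (-z * t) * t ^ (a - 1) * (1 + t) ^ (1/2 - a - 1))
    (volume.restrict (Ioi 0)) := by
  apply Measurable.aestronglyMeasurable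
  fun_prop

lemma tri_bound {a z : ℝ} (hz : 0 ≤ z) : ∀ᵐ t ∂(volume.restrict (Ioi (0:ℝ))),
    ‖Real.exp (-z * t) * t ^ (a - 1) * (1 + t) ^ (1/2 - a - 1)‖
      ≤ t ^ (a - 1) * (1 + t) ^ (1/2 - a - 1) := by
  filter_upwards [ae_restrict_mem measurableSet_Ioi] with t ht
  have ht : 0 < t := ht
  rw [Real.norm_of_nonneg (by positivity), mul_assoc]
  apply mul_le_of_le_one_left (by positivity)
  rw [Real.exp_le_one_iff]
  nlinarith

lemma tri_integrable {a z : ℝ} (ha : 0 < a) (hz : 0 ≤ z) : IntegrableOn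
    (fun t : ℝ => Real.exp (-z * t) * t ^ (a - 1) * (1 + t) ^ (1/2 - a - 1)) (Ioi 0) :=
  Integrable.mono' (tri_int ha).1 (tri_meas a z) (tri_bound hz)

lemma tri_cont {a : ℝ} (ha : 0 < a) : ContinuousOn (tricomiU a (1/2)) (Ici 0) := by
  unfold tricomiU
  refine continuousOn_const.mul ?_
  refine continuousOn_of_dominated (fun z _ => tri_meas a z) (fun z hz => tri_bound hz)
    (tri_int ha).1 ?_
  refine Eventually.of_forall fun t => ?_
  fun_prop

lemma tri_anti {a : ℝ} (ha : 0 < a) {z w : ℝ} (hz : 0 ≤ z) (hzw : z ≤ w) :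
    tricomiU a (1/2) w ≤ tricomiU a (1/2) z := by
  unfold tricomiU
  have := Real.Gamma_pos_of_pos ha
  refine mul_le_mul_of_nonneg_left ?_ (by positivity)
  refine setIntegral_mono_on (tri_integrable ha (hz.trans hzw)) (tri_integrable ha hz)
    measurableSet_Ioi ?_
  intro t ht
  have ht : 0 < t := ht
  gcongr

lemma tri_pos {a : ℝ} (ha : 0 < a) {z : ℝ} (hz : 0 ≤ z) : 0 < tricomiU a (1/2) z := by
  unfold tricomiU
  have := Real.Gamma_pos_of_pos ha
  refine mul_pos (by positivity) ?_
  rw [setIntegral_pos_iff_support_of_nonneg_ae _ (tri_integrable ha hz)]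
  · have : Ioi (0:ℝ) ⊆ Function.support
        (fun t : ℝ => Real.exp (-z * t) * t ^ (a - 1) * (1 + t) ^ (1/2 - a - 1)) ∩ Ioi 0 := by
      intro t ht
      refine ⟨?_, ht⟩
      have ht : 0 < t := ht
      exact ne_of_gt (by positivity)
    refine lt_of_lt_of_le ?_ (measure_mono this)
    simp
  · filter_upwards [ae_restrict_mem measurableSet_Ioi] with t ht
    have ht : 0 < t := ht
    simp only [Pi.zero_apply]
    positivity

lemma tri_zero {a : ℝ} (ha : 0 < a) : tricomiU a (1/2) 0 = √Real.pi / Real.Gamma (a + 1/2) := by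
  unfold tricomiU
  have := Real.Gamma_pos_of_pos ha
  have h := (tri_int ha).2
  simp only [neg_zero, zero_mul, Real.exp_zero, one_mul]
  rw [h]
  field_simp

/-- if `h₀ > 2^α Γ(α/2+1) k_s T_i d_s^{(α−1)/2} / (T_∞ √π)` then
equation (24) has exactly one positive solution. -/
theorem statement_10 (α kl ks dl ds γ Ti Tinf h₀ : ℝ)
    (hα : 0 < α) (hkl : 0 < kl) (hks : 0 < ks) (hdl : 0 < dl) (hds : 0 < ds)
    (hγ : 0 < γ) (hTi : 0 < Ti) (hTinf : 0 < Tinf) (hh₀ : 0 < h₀)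
    (ω : ℝ) (hω : ω = Real.sqrt (dl / ds))
    (hcond : h₀ > (2:ℝ) ^ α * Real.Gamma (α / 2 + 1) * ks * Ti * ds ^ ((α - 1) / 2)
      / (Tinf * Real.sqrt Real.pi)) :
    ∃! x : ℝ, 0 < x ∧
      -(ks * Ti * ds ^ ((α - 1) / 2) / (γ * dl ^ ((α + 1) / 2))) *
          (1 / tricomiU (α / 2 + 1 / 2) (1 / 2) (x ^ 2 * ω ^ 2))
        + h₀ * Tinf / (γ * (2:ℝ) ^ α * dl ^ ((α + 1) / 2)) *
          (1 / (kummerM (α / 2 + 1 / 2) (1 / 2) (x ^ 2)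
                + 2 * Real.sqrt dl * h₀ / kl * x * kummerM (α / 2 + 1) (3 / 2) (x ^ 2)))
        = x ^ (α + 1) := by
  have ha : 0 < α / 2 + 1 / 2 := by positivity
  have ha' : 0 < α / 2 + 1 := by positivity
  have hb : (0:ℝ) < 1 / 2 := by norm_num
  have hb' : (0:ℝ) < 3 / 2 := by norm_num
  have hG := Real.Gamma_pos_of_pos ha'
  obtain ⟨A, hA⟩ : ∃ A, A = ks * Ti * ds ^ ((α - 1) / 2) / (γ * dl ^ ((α + 1) / 2)) := ⟨_, rfl⟩
  obtain ⟨B, hB⟩ : ∃ B, B = h₀ * Tinf / (γ * (2:ℝ) ^ α * dl ^ ((α + 1) / 2)) := ⟨_, rfl⟩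
  obtain ⟨c, hc⟩ : ∃ c, c = 2 * Real.sqrt dl * h₀ / kl := ⟨_, rfl⟩
  have hA0 : 0 < A := by rw [hA]; positivity
  have hB0 : 0 < B := by rw [hB]; positivity
  have hc0 : 0 < c := by rw [hc]; positivity
  have hAB : A * (Real.Gamma (α / 2 + 1) / √Real.pi) < B := by
    rw [gt_iff_lt, div_lt_iff₀ (by positivity)] at hcond
    rw [hA, hB, div_mul_div_comm, div_lt_div_iff₀ (by positivity) (by positivity)]
    have h3 : 0 < γ * dl ^ ((α + 1) / 2) := by positivity
    have := mul_lt_mul_of_pos_right hcond h3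
    linarith
  rw [← hA, ← hB, ← hc]
  clear hA hB hc hcond hω
  set U : ℝ → ℝ := fun x => tricomiU (α / 2 + 1 / 2) (1 / 2) (x ^ 2 * ω ^ 2) with hU
  set D : ℝ → ℝ := fun x => kummerM (α / 2 + 1 / 2) (1 / 2) (x ^ 2)
                + c * x * kummerM (α / 2 + 1) (3 / 2) (x ^ 2) with hD
  have hUpos : ∀ x, 0 < U x := fun x => tri_pos ha (by positivity)
  have hUanti : ∀ x y, 0 ≤ x → x ≤ y → U y ≤ U x := fun x y hx hxy =>
    tri_anti ha (by positivity) (by gcongr)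
  have hM1 : ∀ {a b : ℝ} (_ : 0 < a) (_ : 0 < b) (x : ℝ), 1 ≤ kummerM a b (x ^ 2) := by
    intro a b h1 h2 x
    rw [← kummer_zero a b]
    exact kummer_mono h1 h2 le_rfl (by positivity)
  have hD1 : ∀ x, 0 ≤ x → 1 ≤ D x := by
    intro x hx
    have h1 := hM1 ha hb x
    have h2 := hM1 ha' hb' x
    have : 0 ≤ c * x * kummerM (α / 2 + 1) (3 / 2) (x ^ 2) := by positivity
    simp only [hD]
    linarith
  have hDmono : ∀ x y, 0 ≤ x → x ≤ y → D x ≤ D y := by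
    intro x y hx hxy
    have h2 := hM1 ha' hb' x
    have hxy2 : x ^ 2 ≤ y ^ 2 := by gcongr
    have h3 := kummer_mono ha hb (sq_nonneg x) hxy2
    have h4 := kummer_mono ha' hb' (sq_nonneg x) hxy2
    have hy : 0 ≤ y := hx.trans hxy
    simp only [hD]
    gcongr
  set g : ℝ → ℝ := fun x => -A * (1 / U x) + B * (1 / D x) - x ^ (α + 1) with hg
  have hganti : ∀ x y, 0 ≤ x → x < y → g y < g x := by
    intro x y hx hxy
    have h1 : 1 / U x ≤ 1 / U y := one_div_le_one_div_of_le (hUpos y) (hUanti x y hx hxy.le)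
    have h2 : 1 / D y ≤ 1 / D x := one_div_le_one_div_of_le
      (by linarith [hD1 x hx]) (hDmono x y hx hxy.le)
    have h3 : x ^ (α + 1) < y ^ (α + 1) := Real.rpow_lt_rpow hx hxy (by positivity)
    have h4 := mul_le_mul_of_nonneg_left h1 hA0.le
    have h5 := mul_le_mul_of_nonneg_left h2 hB0.le
    simp only [hg]
    linarith
  have hcont : ∀ R, 0 ≤ R → ContinuousOn g (Icc 0 R) := by
    intro R hR
    have hUc : ContinuousOn U (Icc 0 R) :=
      (tri_cont ha).comp (by fun_prop) (fun x _ => by simp only [mem_Ici]; positivity)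
    have hm : MapsTo (fun x : ℝ => x ^ 2) (Icc 0 R) (Icc 0 (R ^ 2)) := fun x hx =>
      ⟨sq_nonneg x, by have := hx.1; have := hx.2; simp only; gcongr⟩
    have hDc : ContinuousOn D (Icc 0 R) :=
      ((kummer_cont ha hb (R ^ 2) (sq_nonneg R)).comp (by fun_prop) hm).add
        (ContinuousOn.mul (by fun_prop)
          ((kummer_cont ha' hb' (R ^ 2) (sq_nonneg R)).comp (by fun_prop) hm))
    refine ((continuousOn_const.mul (continuousOn_const.div hUc fun x _ => (hUpos x).ne')).add
      (continuousOn_const.mul (continuousOn_const.div hDc fun x hx => ?_))).sub ?_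
    · linarith [hD1 x hx.1]
    · exact (Real.continuous_rpow_const (by positivity)).continuousOn
  have hg0 : 0 < g 0 := by
    have e1 : U 0 = √Real.pi / Real.Gamma (α / 2 + 1) := by
      simp only [hU]
      norm_num
      have := tri_zero ha
      norm_num at this
      rw [this]
      ring_nf
    have e2 : D 0 = 1 := by simp [hD, kummer_zero]
    have e3 : (0:ℝ) ^ (α + 1) = 0 := Real.zero_rpow (by positivity)
    simp only [hg]
    rw [e1, e2, e3, one_div_div]
    linarith
  have hgR : g (B + 1) < 0 := by
    have h1 : 0 < 1 / U (B + 1) := by have := hUpos (B + 1); positivity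
    have h2 : 1 / D (B + 1) ≤ 1 := by
      have := hD1 (B + 1) (by positivity)
      rw [div_le_one (by linarith)]
      exact this
    have h3 : B + 1 ≤ (B + 1) ^ (α + 1) := by
      conv_lhs => rw [← Real.rpow_one (B + 1)]
      exact Real.rpow_le_rpow_of_exponent_le (by linarith) (by linarith)
    have h4 := mul_pos hA0 h1
    have h5 := mul_le_mul_of_nonneg_left h2 hB0.le
    simp only [hg]
    linarith
  obtain ⟨x, hx, hgx⟩ := intermediate_value_Icc' (by positivity : (0:ℝ) ≤ B + 1)
    (hcont (B + 1) (by positivity)) ⟨hgR.le, hg0.le⟩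
  have hx0 : 0 < x := by
    rcases hx.1.eq_or_lt with h | h
    · rw [← h] at hgx; linarith
    · exact h
  refine ⟨x, ⟨hx0, sub_eq_zero.mp hgx⟩, ?_⟩
  rintro y ⟨hy0, hy⟩
  have hgy : g y = 0 := sub_eq_zero.mpr hy
  rcases lt_trichotomy x y with h | h | h
  · have := hganti x y hx0.le h; linarith
  · exact h.symm
  · have := hganti y x hy0.le h; linarith
end
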